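/- Assume ν ≥ 3. Let ℳ be any linear subspace of ℝ^d of codimension ν−1 with ℳ ∩ ker(q) = {0}, and suppose t = (τ_{1,1},…,τ_{ν,k_ν}) is drawn from the probability distribution on ℳ with density proportional to e^{−q(t)}. Then for all indices 1 ≤ m_j, p_j ≤ k_j (j = 1,…,ν): |E[(τ_{1,m_1}+⋯+τ_{ν,m_ν})(τ_{1,p_1}+⋯+τ_{ν,p_ν})]| ≤ Γ/k^{ν−1} with Γ = 14ν⁴R²/(r³ω^{7ν−5}); and if moreover m_j ≠ p_j for every j = 1,…,ν, then |E[(τ_{1,m_1}+⋯+τ_{ν,m_ν})(τ_{1,p_1}+⋯+τ_{ν,p_ν})]| ≤ Γ/k^ν. -/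

import Mathlib

open MeasureTheory Real InnerProductSpace

noncomputable section

variable {ν : ℕ}

/-- The coordinate index set of `ℝ^d`, `d = k_1 + ⋯ + k_ν`. -/
abbrev Idx (kk : Fin ν → ℕ) : Type := Σ j : Fin ν, Fin (kk j)

/-- The multi-index set, of cardinality `n = k_1 ⋯ k_ν`. -/
abbrev MIdx (kk : Fin ν → ℕ) : Type := ∀ j : Fin ν, Fin (kk j)

/-- The ambient Euclidean space `ℝ^d`. -/
abbrev Spc (kk : Fin ν → ℕ) : Type := EuclideanSpace ℝ (Idx kk)

/-- The coordinate functional `t ↦ τ_{j,i}`. -/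
def coordL (kk : Fin ν → ℕ) (p : Idx kk) : Spc kk →ₗ[ℝ] ℝ where
  toFun t := t p
  map_add' _ _ := rfl
  map_smul' _ _ := rfl

/-- The linear functional `t ↦ ⟨a_m, t⟩ = τ_{1,m_1} + ⋯ + τ_{ν,m_ν}`. -/
def linF (kk : Fin ν → ℕ) (m : MIdx kk) : Spc kk →ₗ[ℝ] ℝ :=
  ∑ j : Fin ν, coordL kk ⟨j, m j⟩

/-- The column `a_m` of the constraint matrix `A`. -/
def colA (kk : Fin ν → ℕ) (m : MIdx kk) : Spc kk :=
  (WithLp.equiv 2 (Idx kk → ℝ)).symm (fun p => if p.2 = m p.1 then 1 else 0)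

/-- The quadratic form `q(t) = (1/2) ∑_m α_m (τ_{1,m_1} + ⋯ + τ_{ν,m_ν})²`. -/
def qform (kk : Fin ν → ℕ) (α : MIdx kk → ℝ) (t : Spc kk) : ℝ :=
  (1/2) * ∑ m : MIdx kk, α m * (linF kk m t)^2

/-- The symmetric positive semidefinite matrix `B` with `q(t) = (1/2)⟨t, Bt⟩`,
given explicitly as `B = ∑_m α_m a_m a_mᵀ`. -/
def Bmat (kk : Fin ν → ℕ) (α : MIdx kk → ℝ) : Spc kk →ₗ[ℝ] Spc kk :=
  ∑ m : MIdx kk, α m • (linF kk m).smulRight (colA kk m)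

/-- The sup norm `‖t‖_∞`. -/
def supNorm (kk : Fin ν → ℕ) (t : Spc kk) : ℝ := ‖(WithLp.equiv 2 (Idx kk → ℝ)) t‖

/-- The subspace `ℒ = {t : τ_{j,k_j} = 0 for j = 2,…,ν}`. -/
def Lsub (kk : Fin ν → ℕ) (hk : ∀ j, 0 < kk j) : Submodule ℝ (Spc kk) :=
  ⨅ (j : {j : Fin ν // (j : ℕ) ≠ 0}),
    LinearMap.ker (coordL kk ⟨j.1, ⟨kk j.1 - 1, Nat.sub_lt (hk j.1) one_pos⟩⟩)

/-- The expectation of `f` under the probability distribution on a subspace `ℳ` with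
density proportional to `e^{−q(t)}`. -/
def expM (kk : Fin ν → ℕ) (M : Submodule ℝ (Spc kk)) (α : MIdx kk → ℝ) (f : Spc kk → ℝ) : ℝ :=
  (∫ t : ↥M, f (t : Spc kk) * Real.exp (-(qform kk α (t : Spc kk)))) /
    (∫ t : ↥M, Real.exp (-(qform kk α (t : Spc kk))))


/-- Value of the linear functional for a family of functions. -/
def LL {kk : Fin ν → ℕ} (x : ∀ j, Fin (kk j) → ℝ) (n : MIdx kk) : ℝ := ∑ j, x j (n j)

def avg {kk : Fin ν → ℕ} (f : ∀ j, Fin (kk j) → ℝ) (j : Fin ν) : ℝ := (∑ i, f j i) / kk j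

def NN (kk : Fin ν → ℕ) : ℝ := ∏ j, (kk j : ℝ)

lemma sum_prod_aux {kk : Fin ν → ℕ} (F : ∀ j, Fin (kk j) → ℝ) :
    ∑ n : MIdx kk, ∏ j, F j (n j) = ∏ j, ∑ i, F j i := by
  rw [Finset.prod_univ_sum, Fintype.piFinset_univ]

lemma sum_single {kk : Fin ν → ℕ} (hk : ∀ j, 0 < kk j) (f : ∀ j, Fin (kk j) → ℝ) (j : Fin ν) :
    ∑ n : MIdx kk, f j (n j) = NN kk * avg f j := by
  have h := sum_prod_aux (kk := kk) (fun l i => if l = j then f l i else 1)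
  simp only [Finset.prod_ite_eq', Finset.mem_univ, if_true] at h
  rw [h]
  have h2 : ∀ l : Fin ν, (∑ i : Fin (kk l), if l = j then f l i else 1)
      = (kk l : ℝ) * (if l = j then avg f l else 1) := by
    intro l
    have := hk l
    split_ifs
    · unfold avg; field_simp
    · simp
  simp only [h2, Finset.prod_mul_distrib, Finset.prod_ite_eq', Finset.mem_univ, if_true, NN]

lemma sum_pair {kk : Fin ν → ℕ} (hk : ∀ j, 0 < kk j) (f h : ∀ j, Fin (kk j) → ℝ) (j j' : Fin ν)
    (hj : j ≠ j') :
    ∑ n : MIdx kk, f j (n j) * h j' (n j') = NN kk * (avg f j * avg h j') := by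
  have h1 := sum_prod_aux (kk := kk) (fun l i => (if l = j then f l i else 1) *
    (if l = j' then h l i else 1))
  simp only [Finset.prod_mul_distrib, Finset.prod_ite_eq', Finset.mem_univ, if_true] at h1
  rw [h1]
  have h2 : ∀ l : Fin ν, (∑ i : Fin (kk l), (if l = j then f l i else 1) *
    (if l = j' then h l i else 1))
      = (kk l : ℝ) * ((if l = j then avg f l else 1) * (if l = j' then avg h l else 1)) := by
    intro l
    have := hk l
    by_cases h3 : l = j
    · have h4 : l ≠ j' := fun h => hj (h3 ▸ h)
      simp only [h3, if_true]
      subst h3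
      simp only [h4, if_false, mul_one]; unfold avg; field_simp
    · simp only [h3, if_false, one_mul]
      split_ifs
      · unfold avg; field_simp
      · simp
  simp only [h2, Finset.prod_mul_distrib, Finset.prod_ite_eq', Finset.mem_univ, if_true, NN]

def ind {kk : Fin ν → ℕ} (a : MIdx kk) : ∀ j, Fin (kk j) → ℝ := fun j i => if i = a j then 1 else 0

lemma avg_ind {kk : Fin ν → ℕ} (a : MIdx kk) (j : Fin ν) : avg (ind a) j = 1 / kk j := by
  simp [avg, ind]

lemma NN_pos {kk : Fin ν → ℕ} (hk : ∀ j, 0 < kk j) : 0 < NN kk := by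
  unfold NN; exact Finset.prod_pos (fun j _ => by exact_mod_cast hk j)

lemma avg_nonneg {kk : Fin ν → ℕ} (f : ∀ j, Fin (kk j) → ℝ) (hf : ∀ j i, 0 ≤ f j i) (j : Fin ν) :
    0 ≤ avg f j := by
  unfold avg; exact div_nonneg (Finset.sum_nonneg fun i _ => hf j i) (by positivity)

lemma avg_sq {kk : Fin ν → ℕ} (hk : ∀ j, 0 < kk j) (f : ∀ j, Fin (kk j) → ℝ) (j : Fin ν) :
    avg (fun j i => |f j i|) j ^ 2 ≤ avg (fun j i => f j i ^ 2) j := by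
  have h := sq_sum_le_card_mul_sum_sq (s := (Finset.univ : Finset (Fin (kk j))))
    (f := fun i => |f j i|)
  have hp : (0:ℝ) < kk j := by exact_mod_cast hk j
  simp only [sq_abs, Finset.card_univ, Fintype.card_fin] at h
  unfold avg
  rw [div_pow, div_le_div_iff₀ (by positivity) hp]
  nlinarith

/-- The coercivity inequality for representatives with equal block means. -/
lemma coercive {kk : Fin ν → ℕ} (hk : ∀ j, 0 < kk j) (y : ∀ j, Fin (kk j) → ℝ) (μ : ℝ)
    (hy : ∀ j, avg y j = μ) :
    NN kk * ∑ j, avg (fun j i => y j i ^ 2) j ≤ ∑ n : MIdx kk, LL y n ^ 2 := by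
  have e : ∀ n : MIdx kk, LL y n ^ 2 = ∑ j, ∑ j', y j (n j) * y j' (n j') := by
    intro n; rw [LL, sq, Finset.sum_mul_sum]
  simp only [e]
  rw [Finset.sum_comm, Finset.mul_sum]
  refine Finset.sum_le_sum fun j _ => ?_
  rw [Finset.sum_comm, ← Finset.add_sum_erase _ _ (Finset.mem_univ j)]
  have h1 : ∑ n : MIdx kk, y j (n j) * y j (n j) = NN kk * avg (fun j i => y j i ^ 2) j := by
    rw [← sum_single hk]; simp [sq]
  rw [h1]
  have : 0 ≤ ∑ j' ∈ Finset.univ.erase j, ∑ n : MIdx kk, y j (n j) * y j' (n j') := by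
    refine Finset.sum_nonneg fun j' hj' => ?_
    rw [sum_pair hk y y j j' (Finset.ne_of_mem_erase hj').symm, hy, hy]
    have := NN_pos hk
    nlinarith [mul_self_nonneg μ, mul_nonneg this.le (mul_self_nonneg μ)]
  linarith

lemma core {kk : Fin ν → ℕ} (hν : 1 ≤ ν) (hk : ∀ j, 0 < kk j) (r R : ℝ) (hr : 0 < r) (hrR : r ≤ R)
    (α : MIdx kk → ℝ) (hα1 : ∀ m, r ≤ α m) (hα2 : ∀ m, α m ≤ R) (p m : MIdx kk)
    (x : ∀ j, Fin (kk j) → ℝ)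
    (hx : ∀ a : MIdx kk, ∀ j, ∑ n : MIdx kk, α n * LL x n * ind a j (n j) = ind a j (p j)) :
    |LL x m| ≤ ∑ j, (if m j = p j then kk j / (r * NN kk) else 0)
      + 2 * ν ^ 3 * R ^ 2 / (r ^ 3 * NN kk) := by
  have hN := NN_pos hk
  have hR : 0 < R := hr.trans_le hrR
  have hkp : ∀ j, (0:ℝ) < kk j := fun j => by exact_mod_cast hk j
  have hα0 : ∀ n, 0 < α n := fun n => hr.trans_le (hα1 n)
  have ind0 : ∀ (a : MIdx kk) j i, 0 ≤ ind a j i := fun a j i => by unfold ind; split_ifs <;> norm_num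
  -- diagonal entries
  set D : MIdx kk → Fin ν → ℝ := fun a j => ∑ n : MIdx kk, α n * ind a j (n j) with hD
  have hDlow : ∀ a j, r * NN kk / kk j ≤ D a j := by
    intro a j
    have : r * NN kk / kk j = ∑ n : MIdx kk, r * ind a j (n j) := by
      rw [← Finset.mul_sum, sum_single hk, avg_ind]; ring
    rw [this]
    exact Finset.sum_le_sum fun n _ => mul_le_mul_of_nonneg_right (hα1 n) (ind0 _ _ _)
  have hDpos : ∀ a j, 0 < D a j := fun a j =>
    lt_of_lt_of_le (by have := hkp j; positivity) (hDlow a j)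
  -- first approximation
  set e : ∀ j, Fin (kk j) → ℝ := fun j i => ind p j i / D p j with he
  -- balanced remainder
  set z : ∀ j, Fin (kk j) → ℝ := fun j i => x j i - e j i with hz
  set μ : ℝ := (∑ j, avg z j) / ν with hμ
  set y : ∀ j, Fin (kk j) → ℝ := fun j i => z j i + (μ - avg z j) with hy
  have hνp : (0:ℝ) < ν := by exact_mod_cast hν
  have hymean : ∀ j, avg y j = μ := by
    intro j
    have := hkp j
    simp only [hy, avg, Finset.sum_add_distrib, Finset.sum_const, Finset.card_univ,
      Fintype.card_fin, nsmul_eq_mul]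
    field_simp
    ring
  have hLy : ∀ n, LL y n = LL x n - LL e n := by
    intro n
    simp only [LL, hy, hz, Finset.sum_add_distrib, Finset.sum_sub_distrib, Finset.sum_const,
      Finset.card_univ, Fintype.card_fin, nsmul_eq_mul]
    have : (ν:ℝ) * μ = ∑ j, avg z j := by rw [hμ]; field_simp
    simp only [hz] at this
    rw [this]; ring
  -- residual
  set g : MIdx kk → Fin ν → ℝ := fun a j => ∑ n : MIdx kk, α n * LL y n * ind a j (n j) with hg
  have hge : ∀ a j, g a j = - ∑ j' ∈ Finset.univ.erase j,
      (∑ n : MIdx kk, α n * (ind a j (n j) * ind p j' (n j'))) / D p j' := by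
    intro a j
    have h1 : g a j = ind a j (p j) - ∑ j', ∑ n : MIdx kk, α n * (ind a j (n j) * ind p j' (n j')) / D p j' := by
      rw [← hx a j, Finset.sum_comm, ← Finset.sum_sub_distrib]
      refine Finset.sum_congr rfl fun n _ => ?_
      rw [hLy]
      simp only [LL, he]
      rw [mul_sub, sub_mul, Finset.mul_sum (f := fun i => ind p i (n i) / D p i), Finset.sum_mul]
      congr 1
      refine Finset.sum_congr rfl fun j' _ => ?_
      ring
    rw [h1, ← Finset.add_sum_erase _ _ (Finset.mem_univ j)]
    have h2 : ∑ n : MIdx kk, α n * (ind a j (n j) * ind p j (n j)) / D p j = ind a j (p j) := by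
      rw [← Finset.sum_div, div_eq_iff (hDpos p j).ne', hD]
      simp only
      rw [Finset.mul_sum]
      refine Finset.sum_congr rfl fun n _ => ?_
      unfold ind
      by_cases h : n j = p j
      · simp [h]
      · simp [h]
    rw [h2]
    simp only [Finset.sum_div]
    ring
  have hgb : ∀ a j, |g a j| ≤ ν * R / (r * kk j) := by
    intro a j
    have hkj := hkp j
    rw [hge, abs_neg]
    refine (Finset.abs_sum_le_sum_abs _ _).trans ?_
    have : ∀ j' ∈ Finset.univ.erase j,
        |(∑ n : MIdx kk, α n * (ind a j (n j) * ind p j' (n j'))) / D p j'| ≤ R / (r * kk j) := by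
      intro j' hj'
      have hkj' := hkp j'
      have hs : ∑ n : MIdx kk, α n * (ind a j (n j) * ind p j' (n j')) ≤ R * (NN kk * (1 / kk j * (1 / kk j'))) := by
        rw [← avg_ind a j, ← avg_ind p j', ← sum_pair hk _ _ j j' (Finset.ne_of_mem_erase hj').symm,
          Finset.mul_sum]
        exact Finset.sum_le_sum fun n _ => mul_le_mul_of_nonneg_right (hα2 n)
          (mul_nonneg (ind0 _ _ _) (ind0 _ _ _))
      have hs0 : 0 ≤ ∑ n : MIdx kk, α n * (ind a j (n j) * ind p j' (n j')) :=
        Finset.sum_nonneg fun n _ => mul_nonneg (hα0 n).le (mul_nonneg (ind0 _ _ _) (ind0 _ _ _))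
      rw [abs_of_nonneg (div_nonneg hs0 (hDpos _ _).le), div_le_iff₀ (hDpos _ _)]
      refine hs.trans ?_
      calc R * (NN kk * (1 / kk j * (1 / kk j'))) = R / (r * kk j) * (r * NN kk / kk j') := by
            field_simp
        _ ≤ _ := mul_le_mul_of_nonneg_left (hDlow p j') (by positivity)
    refine (Finset.sum_le_sum this).trans ?_
    rw [Finset.sum_const, nsmul_eq_mul]
    have hc : ((Finset.univ.erase j).card : ℝ) ≤ ν := by
      have := Finset.card_le_univ (Finset.univ.erase j)
      rw [Fintype.card_fin] at this
      exact_mod_cast this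
    calc _ ≤ (ν:ℝ) * (R / (r * kk j)) := mul_le_mul_of_nonneg_right hc (by positivity)
      _ = _ := by ring
  -- energy
  set T : ℝ := ∑ j, avg (fun j i => |y j i|) j with hT
  have hT0 : 0 ≤ T := Finset.sum_nonneg fun j _ => avg_nonneg _ (fun j i => abs_nonneg _) j
  have hen : ∑ n : MIdx kk, α n * LL y n ^ 2 ≤ ν * R / r * T := by
    have h1 : ∑ n : MIdx kk, α n * LL y n ^ 2 =
        ∑ j, ∑ i, y j i * g (Function.update p j i) j := by
      have : ∀ j i, y j i * g (Function.update p j i) j =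
          ∑ n : MIdx kk, α n * LL y n * (if n j = i then y j i else 0) := by
        intro j i
        rw [hg]; simp only
        rw [Finset.mul_sum]
        refine Finset.sum_congr rfl fun n _ => ?_
        simp only [ind, Function.update_self]
        split_ifs <;> ring
      simp only [this]
      have h3 : ∀ j, ∑ i, ∑ n : MIdx kk, α n * LL y n * (if n j = i then y j i else 0)
          = ∑ n : MIdx kk, α n * LL y n * y j (n j) := by
        intro j
        rw [Finset.sum_comm]
        refine Finset.sum_congr rfl fun n _ => ?_
        rw [← Finset.mul_sum]; simp
      simp only [h3]
      rw [Finset.sum_comm]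
      refine Finset.sum_congr rfl fun n _ => ?_
      rw [← Finset.mul_sum, sq, mul_assoc]; rfl
    rw [h1, hT, Finset.mul_sum]
    refine Finset.sum_le_sum fun j _ => ?_
    have hkj := hkp j
    unfold avg
    rw [Finset.sum_div, Finset.mul_sum]
    refine Finset.sum_le_sum fun i _ => ?_
    calc y j i * g (Function.update p j i) j ≤ |y j i * g (Function.update p j i) j| := le_abs_self _
      _ = |y j i| * |g (Function.update p j i) j| := abs_mul _ _
      _ ≤ |y j i| * (ν * R / (r * kk j)) := mul_le_mul_of_nonneg_left (hgb _ _) (abs_nonneg _)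
      _ = _ := by field_simp
  have hTb : T ≤ ν ^ 2 * R / (r ^ 2 * NN kk) := by
    have h1 := coercive hk y μ hymean
    have h2 : r * ∑ n : MIdx kk, LL y n ^ 2 ≤ ∑ n : MIdx kk, α n * LL y n ^ 2 := by
      rw [Finset.mul_sum]
      exact Finset.sum_le_sum fun n _ => mul_le_mul_of_nonneg_right (hα1 n) (sq_nonneg _)
    have h3 : T ^ 2 ≤ ν * ∑ j, avg (fun j i => y j i ^ 2) j := by
      have := sq_sum_le_card_mul_sum_sq (s := (Finset.univ : Finset (Fin ν)))
        (f := fun j => avg (fun j i => |y j i|) j)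
      rw [Finset.card_univ, Fintype.card_fin] at this
      refine this.trans (mul_le_mul_of_nonneg_left ?_ hνp.le)
      exact Finset.sum_le_sum fun j _ => avg_sq hk y j
    set Q := ∑ j, avg (fun j i => y j i ^ 2) j
    have h4 : r * (NN kk * Q) ≤ ν * R / r * T :=
      (mul_le_mul_of_nonneg_left h1 hr.le).trans (h2.trans hen)
    have h5 : r * NN kk * T ^ 2 ≤ ν * (ν * R / r * T) := by
      calc r * NN kk * T ^ 2 ≤ r * NN kk * (ν * Q) := mul_le_mul_of_nonneg_left h3 (by positivity)
        _ = ν * (r * (NN kk * Q)) := by ring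
        _ ≤ _ := mul_le_mul_of_nonneg_left h4 hνp.le
    rcases hT0.eq_or_lt with h | h
    · rw [← h]; positivity
    · have h6 : r * NN kk * T ≤ ν * (ν * R / r) := by
        refine le_of_mul_le_mul_right ?_ h
        calc _ = r * NN kk * T ^ 2 := by ring
          _ ≤ _ := h5
          _ = _ := by ring
      rw [le_div_iff₀ (by positivity)]
      calc T * (r ^ 2 * NN kk) = r * (r * NN kk * T) := by ring
        _ ≤ r * (ν * (ν * R / r)) := mul_le_mul_of_nonneg_left h6 hr.le
        _ = _ := by field_simp
  -- sup bound
  have hyb : ∀ j, |y j (m j)| ≤ 2 * ν ^ 2 * R ^ 2 / (r ^ 3 * NN kk) := by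
    intro j
    have hkj := hkp j
    have h1 : D m j * y j (m j) = g m j - ∑ j' ∈ Finset.univ.erase j,
        ∑ n : MIdx kk, α n * (ind m j (n j) * y j' (n j')) := by
      rw [Finset.sum_comm, hD, hg]
      simp only
      rw [Finset.sum_mul, ← Finset.sum_sub_distrib]
      refine Finset.sum_congr rfl fun n _ => ?_
      rw [LL, ← Finset.add_sum_erase _ _ (Finset.mem_univ j), ← Finset.mul_sum, ← Finset.mul_sum]
      by_cases h : n j = m j
      · rw [h]; ring
      · simp [ind, h]
    have h2 : ∀ j' ∈ Finset.univ.erase j, |∑ n : MIdx kk, α n * (ind m j (n j) * y j' (n j'))|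
        ≤ R * NN kk / kk j * avg (fun j i => |y j i|) j' := by
      intro j' hj'
      have : R * NN kk / kk j * avg (fun j i => |y j i|) j' =
          R * ∑ n : MIdx kk, ind m j (n j) * |y j' (n j')| := by
        rw [sum_pair hk (ind m) (fun j i => |y j i|) j j' (Finset.ne_of_mem_erase hj').symm, avg_ind]
        ring
      rw [this, Finset.mul_sum]
      refine (Finset.abs_sum_le_sum_abs _ _).trans (Finset.sum_le_sum fun n _ => ?_)
      rw [abs_mul, abs_mul, abs_of_pos (hα0 n), abs_of_nonneg (ind0 _ _ _)]
      exact mul_le_mul_of_nonneg_right (hα2 n) (mul_nonneg (ind0 _ _ _) (abs_nonneg _))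
    have h3 : |∑ j' ∈ Finset.univ.erase j,
        ∑ n : MIdx kk, α n * (ind m j (n j) * y j' (n j'))| ≤ R * NN kk / kk j * T := by
      refine (Finset.abs_sum_le_sum_abs _ _).trans ((Finset.sum_le_sum h2).trans ?_)
      rw [← Finset.mul_sum]
      refine mul_le_mul_of_nonneg_left ?_ (by positivity)
      exact Finset.sum_le_sum_of_subset_of_nonneg (Finset.erase_subset _ _)
        fun j _ _ => avg_nonneg _ (fun j i => abs_nonneg _) j
    have h4 : D m j * |y j (m j)| ≤ ν * R / (r * kk j) + R * NN kk / kk j * T := by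
      rw [← abs_of_pos (hDpos m j), ← abs_mul, h1]
      exact (abs_sub _ _).trans (add_le_add (hgb m j) h3)
    have h5 : r * NN kk / kk j * |y j (m j)| ≤ 2 * ν ^ 2 * R ^ 2 / (r ^ 2 * kk j) := by
      refine (mul_le_mul_of_nonneg_right (hDlow m j) (abs_nonneg _)).trans (h4.trans ?_)
      have h6 : R * NN kk / kk j * T ≤ R * NN kk / kk j * (ν ^ 2 * R / (r ^ 2 * NN kk)) :=
        mul_le_mul_of_nonneg_left hTb (by positivity)
      have h7 : R * NN kk / kk j * (ν ^ 2 * R / (r ^ 2 * NN kk)) = ν ^ 2 * R ^ 2 / (r ^ 2 * kk j) := by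
        field_simp
      have h8 : ν * R / (r * kk j) ≤ ν ^ 2 * R ^ 2 / (r ^ 2 * kk j) := by
        have hν1 : (1:ℝ) ≤ ν := by exact_mod_cast hν
        rw [div_le_div_iff₀ (by positivity) (by positivity)]
        have : (ν * R * r) * (r * kk j) ≤ (ν * R * (ν * R)) * (r * kk j) := by
          refine mul_le_mul_of_nonneg_right (mul_le_mul_of_nonneg_left ?_ (by positivity))
            (by positivity)
          nlinarith
        nlinarith
      have h9 : 2 * ν ^ 2 * R ^ 2 / (r ^ 2 * kk j) = ν ^ 2 * R ^ 2 / (r ^ 2 * kk j) + ν ^ 2 * R ^ 2 / (r ^ 2 * kk j) := by ring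
      linarith
    have h10 : 0 < r * NN kk / kk j := by positivity
    refine le_of_mul_le_mul_left (h5.trans (le_of_eq ?_)) h10
    field_simp
  have hLm : LL x m = LL e m + LL y m := by rw [hLy]; ring
  rw [hLm]
  refine (abs_add_le _ _).trans (add_le_add ?_ ?_)
  · unfold LL
    refine (Finset.abs_sum_le_sum_abs _ _).trans (Finset.sum_le_sum fun j _ => ?_)
    simp only [he, ind]
    have hkj := hkp j
    split_ifs with h
    · rw [abs_of_pos (div_pos one_pos (hDpos _ _)), div_le_iff₀ (hDpos _ _)]
      calc (1:ℝ) = kk j / (r * NN kk) * (r * NN kk / kk j) := by field_simp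
        _ ≤ _ := mul_le_mul_of_nonneg_left (hDlow p j) (by positivity)
    · simp
  · unfold LL
    refine (Finset.abs_sum_le_sum_abs _ _).trans ((Finset.sum_le_sum fun j _ => hyb j).trans ?_)
    rw [Finset.sum_const, Finset.card_univ, Fintype.card_fin, nsmul_eq_mul]
    exact le_of_eq (by ring)

section gauss
variable {V ι : Type*} [NormedAddCommGroup V] [InnerProductSpace ℝ V] [FiniteDimensional ℝ V]
  [MeasurableSpace V] [BorelSpace V] [Fintype ι]

/-- The abstract quadratic form. -/
def qq (ℓ : ι → V →ₗ[ℝ] ℝ) (α : ι → ℝ) (t : V) : ℝ := (1/2) * ∑ n, α n * (ℓ n t) ^ 2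

lemma qq_lower (ℓ : ι → V →ₗ[ℝ] ℝ) (α : ι → ℝ) (r : ℝ) (hr : 0 < r) (hα : ∀ n, r ≤ α n)
    (hinj : ∀ t, (∀ n, ℓ n t = 0) → t = 0) : ∃ c > 0, ∀ t, c * ‖t‖ ^ 2 ≤ qq ℓ α t := by
  obtain ⟨K, hK, hA⟩ := LinearMap.exists_antilipschitzWith (LinearMap.pi ℓ) (by
    rw [LinearMap.ker_eq_bot']
    intro t ht
    exact hinj t fun n => congrFun ht n)
  refine ⟨r / (2 * K ^ 2), by positivity, fun t => ?_⟩
  have hK' : (0:ℝ) < K := hK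
  have h1 : ‖t‖ ≤ K * ‖LinearMap.pi ℓ t‖ := by
    simpa using hA.le_mul_norm_sub (x := t) (y := 0)
  have h2 : ‖LinearMap.pi ℓ t‖ ^ 2 ≤ ∑ n, (ℓ n t) ^ 2 := by
    have h3 : ‖LinearMap.pi ℓ t‖ ≤ Real.sqrt (∑ n, (ℓ n t) ^ 2) := by
      refine (pi_norm_le_iff_of_nonneg (Real.sqrt_nonneg _)).2 fun n => ?_
      refine Real.le_sqrt_of_sq_le ?_
      rw [Real.norm_eq_abs, sq_abs]
      exact Finset.single_le_sum (f := fun n => (ℓ n t) ^ 2) (fun n _ => sq_nonneg _)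
        (Finset.mem_univ n)
    calc _ ≤ (Real.sqrt (∑ n, (ℓ n t) ^ 2)) ^ 2 := by gcongr
      _ = _ := Real.sq_sqrt (Finset.sum_nonneg fun n _ => sq_nonneg _)
  have h4 : r * ∑ n, (ℓ n t) ^ 2 ≤ ∑ n, α n * (ℓ n t) ^ 2 := by
    rw [Finset.mul_sum]
    exact Finset.sum_le_sum fun n _ => mul_le_mul_of_nonneg_right (hα n) (sq_nonneg _)
  have h5 : ‖t‖ ^ 2 ≤ K ^ 2 * ∑ n, (ℓ n t) ^ 2 := by
    calc ‖t‖ ^ 2 ≤ (K * ‖LinearMap.pi ℓ t‖) ^ 2 := by gcongr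
      _ = K ^ 2 * ‖LinearMap.pi ℓ t‖ ^ 2 := by ring
      _ ≤ _ := by gcongr
  unfold qq
  calc r / (2 * K ^ 2) * ‖t‖ ^ 2 ≤ r / (2 * K ^ 2) * (K ^ 2 * ∑ n, (ℓ n t) ^ 2) := by gcongr
    _ = 1 / 2 * (r * ∑ n, (ℓ n t) ^ 2) := by field_simp
    _ ≤ _ := by gcongr

lemma qq_diff (ℓ : ι → V →ₗ[ℝ] ℝ) (α : ι → ℝ) (t : V) :
    HasFDerivAt (qq ℓ α) (∑ n, (α n * ℓ n t) • LinearMap.toContinuousLinearMap (ℓ n)) t := by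
  have h : ∀ n ∈ (Finset.univ : Finset ι), HasFDerivAt (fun t => α n * (ℓ n t) ^ 2)
      ((α n * (2 * ℓ n t)) • LinearMap.toContinuousLinearMap (ℓ n)) t := by
    intro n _
    have h0 : HasFDerivAt (fun t => ℓ n t) (LinearMap.toContinuousLinearMap (ℓ n)) t :=
      (LinearMap.toContinuousLinearMap (ℓ n)).hasFDerivAt
    have := (h0.pow 2).const_mul (α n)
    convert! this using 1
    ext v; simp; ring
  have := (HasFDerivAt.fun_sum h).const_mul (1/2)
  convert! this using 1
  ext v
  simp [Finset.mul_sum]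
  refine Finset.sum_congr rfl fun n _ => ?_
  ring

lemma gauss_int (c : ℝ) (hc : 0 < c) : Integrable (fun t : V => Real.exp (-c * ‖t‖ ^ 2)) := by
  have := (GaussianFourier.integrable_cexp_neg_mul_sq_norm_add (V := V) (b := (c:ℂ)) (by simpa) 0 0).re
  refine this.congr (Filter.Eventually.of_forall fun t => ?_)
  simp only [zero_mul, add_zero]
  rw [show (-(c:ℂ) * (‖t‖:ℂ) ^ 2) = ((-c * ‖t‖ ^ 2 : ℝ) : ℂ) by push_cast; ring, ← Complex.ofReal_exp]
  exact Complex.ofReal_re _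

lemma poly_int (ℓ : ι → V →ₗ[ℝ] ℝ) (α : ι → ℝ) (r : ℝ) (hr : 0 < r) (hα : ∀ n, r ≤ α n)
    (hinj : ∀ t, (∀ n, ℓ n t = 0) → t = 0) (f : V → ℝ) (hf : Continuous f) (C : ℝ)
    (hC : ∀ t, |f t| ≤ C * (1 + ‖t‖ ^ 2)) :
    Integrable (fun t => f t * Real.exp (-qq ℓ α t)) := by
  obtain ⟨c, hc, hq⟩ := qq_lower ℓ α r hr hα hinj
  have hC0 : 0 ≤ C := by simpa using (abs_nonneg _).trans (hC 0)
  have hqc : Continuous (qq ℓ α) := continuous_iff_continuousAt.2 fun t => (qq_diff ℓ α t).continuousAt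
  refine ((gauss_int (V := V) (c/2) (by positivity)).const_mul (C * (1 + 2 / c))).mono'
    (by fun_prop) (Filter.Eventually.of_forall fun t => ?_)
  rw [norm_mul, Real.norm_eq_abs, Real.norm_eq_abs, abs_of_pos (Real.exp_pos _)]
  have h1 : Real.exp (-qq ℓ α t) ≤ Real.exp (-(c/2) * ‖t‖^2) * Real.exp (-(c/2) * ‖t‖^2) := by
    rw [← Real.exp_add]
    exact Real.exp_le_exp.2 (by linarith [hq t])
  have h2 : (1 + ‖t‖ ^ 2) * Real.exp (-(c/2) * ‖t‖^2) ≤ 1 + 2 / c := by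
    rw [show -(c/2) * ‖t‖^2 = -((c/2) * ‖t‖^2) by ring, Real.exp_neg, ← div_eq_mul_inv,
      div_le_iff₀ (Real.exp_pos _)]
    have h3 := Real.add_one_le_exp ((c/2) * ‖t‖^2)
    have h4 : (1 + 2/c) * (c/2 * ‖t‖^2 + 1) ≤ (1 + 2/c) * Real.exp ((c/2) * ‖t‖^2) :=
      mul_le_mul_of_nonneg_left h3 (by positivity)
    have h5 : (1 + 2/c) * (c/2 * ‖t‖^2 + 1) = 1 + ‖t‖^2 + (c/2 * ‖t‖^2 + 2/c) := by
      field_simp; ring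
    have h6 : 0 ≤ c/2 * ‖t‖^2 + 2/c := by positivity
    linarith
  calc |f t| * Real.exp (-qq ℓ α t)
      ≤ (C * (1 + ‖t‖ ^ 2)) * (Real.exp (-(c/2) * ‖t‖^2) * Real.exp (-(c/2) * ‖t‖^2)) :=
        mul_le_mul (hC t) h1 (Real.exp_pos _).le (by positivity)
    _ = C * ((1 + ‖t‖ ^ 2) * Real.exp (-(c/2) * ‖t‖^2)) * Real.exp (-(c/2) * ‖t‖^2) := by ring
    _ ≤ C * (1 + 2 / c) * Real.exp (-(c/2) * ‖t‖^2) := by gcongr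

lemma gauss_cov (ℓ : ι → V →ₗ[ℝ] ℝ) (α : ι → ℝ) (r : ℝ) (hr : 0 < r) (hα : ∀ n, r ≤ α n)
    (hinj : ∀ t, (∀ n, ℓ n t = 0) → t = 0) (L P : V →ₗ[ℝ] ℝ) (x : V)
    (hx : ∀ t, ∑ n, α n * ℓ n x * ℓ n t = P t) :
    (∫ t, L t * P t * Real.exp (-qq ℓ α t)) / (∫ t, Real.exp (-qq ℓ α t)) = L x := by
  have hLc : Continuous L := L.continuous_of_finiteDimensional
  have hPc : Continuous P := P.continuous_of_finiteDimensional
  have hLb : ∀ t, |L t| ≤ ‖LinearMap.toContinuousLinearMap L‖ * ‖t‖ :=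
    fun t => (LinearMap.toContinuousLinearMap L).le_opNorm t
  have hPb : ∀ t, |P t| ≤ ‖LinearMap.toContinuousLinearMap P‖ * ‖t‖ :=
    fun t => (LinearMap.toContinuousLinearMap P).le_opNorm t
  set a := ‖LinearMap.toContinuousLinearMap L‖ with ha
  set b := ‖LinearMap.toContinuousLinearMap P‖ with hb
  have ha0 : 0 ≤ a := norm_nonneg _
  have hb0 : 0 ≤ b := norm_nonneg _
  have i1 : Integrable (fun t => Real.exp (-qq ℓ α t)) := by
    simpa using poly_int ℓ α r hr hα hinj (fun _ => 1) continuous_const 1 (fun t => by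
      rw [abs_one]; nlinarith [sq_nonneg ‖t‖])
  have i2 : Integrable (fun t => L t * P t * Real.exp (-qq ℓ α t)) :=
    poly_int ℓ α r hr hα hinj (fun t => L t * P t) (hLc.mul hPc) (a * b) (fun t => by
      rw [abs_mul]
      calc _ ≤ (a * ‖t‖) * (b * ‖t‖) := mul_le_mul (hLb t) (hPb t) (abs_nonneg _) (by positivity)
        _ = a * b * ‖t‖ ^ 2 := by ring
        _ ≤ _ := mul_le_mul_of_nonneg_left (by linarith) (by positivity))
  have i3 : Integrable (fun t => L t * Real.exp (-qq ℓ α t)) :=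
    poly_int ℓ α r hr hα hinj L hLc a (fun t => (hLb t).trans
      (mul_le_mul_of_nonneg_left (by nlinarith [sq_nonneg (‖t‖ - 1)]) ha0))
  have hg : ∀ t, HasFDerivAt (fun t => Real.exp (-qq ℓ α t)) (Real.exp (-qq ℓ α t) •
      (-(∑ n, (α n * ℓ n t) • LinearMap.toContinuousLinearMap (ℓ n)))) t :=
    fun t => (qq_diff ℓ α t).neg.exp
  have hgx : ∀ t, (Real.exp (-qq ℓ α t) •
      (-(∑ n, (α n * ℓ n t) • LinearMap.toContinuousLinearMap (ℓ n)))) x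
        = - (P t * Real.exp (-qq ℓ α t)) := by
    intro t
    rw [← hx t]
    simp [Finset.sum_mul, Finset.mul_sum]
    refine Finset.sum_congr rfl fun n _ => ?_
    ring
  have key := integral_bilinear_hasFDerivAt_right_eq_neg_left_of_integrable (μ := (volume : Measure V))
    (B := ContinuousLinearMap.mul ℝ ℝ) (f := L) (f' := fun _ => LinearMap.toContinuousLinearMap L)
    (g := fun t => Real.exp (-qq ℓ α t)) (g' := fun t => Real.exp (-qq ℓ α t) •
      (-(∑ n, (α n * ℓ n t) • LinearMap.toContinuousLinearMap (ℓ n)))) (v := x)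
    (by simpa using i1.const_mul (L x))
    (by
      simp only [hgx]
      refine i2.neg.congr (Filter.Eventually.of_forall fun t => ?_)
      simp; ring)
    (by simpa using i3)
    (fun t _ => (LinearMap.toContinuousLinearMap L).hasFDerivAt)
    (fun t _ => hg t)
  simp only [hgx] at key
  simp only [ContinuousLinearMap.mul_apply', mul_neg, integral_neg, neg_inj,
    LinearMap.coe_toContinuousLinearMap', integral_const_mul] at key
  have hpos := integral_exp_pos i1
  rw [div_eq_iff hpos.ne', ← key]
  simp only [mul_assoc]

lemma exists_rep (ℓ : ι → V →ₗ[ℝ] ℝ) (α : ι → ℝ) (r : ℝ) (hr : 0 < r) (hα : ∀ n, r ≤ α n)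
    (hinj : ∀ t, (∀ n, ℓ n t = 0) → t = 0) (P : V →ₗ[ℝ] ℝ) :
    ∃ x, ∀ t, ∑ n, α n * ℓ n x * ℓ n t = P t := by
  let F : V →ₗ[ℝ] (V →ₗ[ℝ] ℝ) := ∑ n, α n • (ℓ n).smulRight (ℓ n)
  have hF : ∀ x t, F x t = ∑ n, α n * ℓ n x * ℓ n t := by
    intro x t
    simp [F, LinearMap.sum_apply, mul_assoc]
  have hi : Function.Injective F := by
    rw [← LinearMap.ker_eq_bot, LinearMap.ker_eq_bot']
    intro x h
    have h1 := hF x x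
    rw [h] at h1
    have h2 : ∀ n ∈ Finset.univ, 0 ≤ α n * ℓ n x * ℓ n x := fun n _ => by
      rw [mul_assoc]; exact mul_nonneg (hr.le.trans (hα n)) (mul_self_nonneg _)
    have h3 := (Finset.sum_eq_zero_iff_of_nonneg h2).1 h1.symm
    refine hinj x fun n => ?_
    have h4 := h3 n (Finset.mem_univ n)
    have := (hr.trans_le (hα n)).ne'
    simpa [this] using h4
  have hs : Function.Surjective F :=
    (LinearMap.injective_iff_surjective_of_finrank_eq_finrank
      (Subspace.dual_finrank_eq (K := ℝ) (V := V)).symm).1 hi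
  obtain ⟨x, hx⟩ := hs P
  exact ⟨x, fun t => by rw [← hF, hx]⟩

end gauss

lemma linF_apply (kk : Fin ν → ℕ) (n : MIdx kk) (t : Spc kk) :
    linF kk n t = ∑ j, t ⟨j, n j⟩ := by
  simp only [linF, LinearMap.sum_apply]
  rfl

lemma inner_colA (kk : Fin ν → ℕ) (n : MIdx kk) (t : Spc kk) :
    inner ℝ t (colA kk n) = linF kk n t := by
  rw [linF_apply, PiLp.inner_apply, Fintype.sum_sigma]
  refine Finset.sum_congr rfl fun j _ => ?_
  simp [colA]

lemma Bmat_apply (kk : Fin ν → ℕ) (α : MIdx kk → ℝ) (t : Spc kk) :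
    Bmat kk α t = ∑ n : MIdx kk, (α n * linF kk n t) • colA kk n := by
  simp [Bmat, LinearMap.sum_apply, mul_smul]

lemma mem_ker_iff (kk : Fin ν → ℕ) (α : MIdx kk → ℝ) (hα : ∀ n, 0 < α n) (t : Spc kk) :
    t ∈ LinearMap.ker (Bmat kk α) ↔ ∀ n, linF kk n t = 0 := by
  constructor
  · intro h
    have h1 : inner ℝ t (Bmat kk α t) = ∑ n : MIdx kk, α n * (linF kk n t) ^ 2 := by
      rw [Bmat_apply, inner_sum]
      refine Finset.sum_congr rfl fun n _ => ?_
      rw [inner_smul_right, inner_colA]; ring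
    rw [LinearMap.mem_ker.1 h, inner_zero_right] at h1
    have h3 := (Finset.sum_eq_zero_iff_of_nonneg
      (fun n _ => mul_nonneg (hα n).le (sq_nonneg (linF kk n t)))).1 h1.symm
    intro n
    have h4 := h3 n (Finset.mem_univ n)
    have := (hα n).ne'
    simpa [this] using h4
  · intro h
    rw [LinearMap.mem_ker, Bmat_apply]
    simp [h]

/-- Block-constant vectors. -/
def shiftL (kk : Fin ν → ℕ) : (Fin ν → ℝ) →ₗ[ℝ] Spc kk where
  toFun c := WithLp.toLp 2 (fun p => c p.1)
  map_add' _ _ := rfl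
  map_smul' _ _ := rfl

lemma finrank_ker_ge (kk : Fin ν → ℕ) (hk : ∀ j, 0 < kk j) (α : MIdx kk → ℝ) (hα : ∀ n, 0 < α n) :
    ν - 1 ≤ Module.finrank ℝ (LinearMap.ker (Bmat kk α)) := by
  let s : (Fin ν → ℝ) →ₗ[ℝ] ℝ := ∑ j, LinearMap.proj j
  have hs : ∀ c, s c = ∑ j, c j := fun c => by simp [s, LinearMap.sum_apply]
  have h1 := LinearMap.finrank_range_add_finrank_ker s
  have h2 : Module.finrank ℝ (LinearMap.range s) ≤ 1 := by
    simpa using Submodule.finrank_le (LinearMap.range s)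
  have hi : Function.Injective (shiftL kk) := by
    intro c c' h
    funext j
    exact congrArg (fun t : Spc kk => t ⟨j, ⟨0, hk j⟩⟩) h
  have h3 := (Submodule.equivMapOfInjective (shiftL kk) hi (LinearMap.ker s)).finrank_eq
  have h4 : Submodule.map (shiftL kk) (LinearMap.ker s) ≤ LinearMap.ker (Bmat kk α) := by
    rintro _ ⟨c, hc, rfl⟩
    rw [mem_ker_iff kk α hα]
    intro n
    rw [linF_apply, ← LinearMap.mem_ker.1 hc, hs]
    rfl
  have h5 := Submodule.finrank_mono h4
  rw [Module.finrank_fin_fun] at h1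
  omega

lemma expM_bound (kk : Fin ν → ℕ) (hν : 1 ≤ ν) (hk : ∀ j, 0 < kk j)
    (r R : ℝ) (hr : 0 < r) (hrR : r ≤ R)
    (α : MIdx kk → ℝ) (hα1 : ∀ m, r ≤ α m) (hα2 : ∀ m, α m ≤ R)
    (M : Submodule ℝ (Spc kk))
    (hcodim : Module.finrank ℝ ↥M + (ν - 1) = Module.finrank ℝ (Spc kk))
    (hMker : M ⊓ LinearMap.ker (Bmat kk α) = ⊥)
    (m p : MIdx kk) :
    |expM kk M α (fun t => linF kk m t * linF kk p t)| ≤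
      ∑ j, (if m j = p j then kk j / (r * NN kk) else 0)
      + 2 * ν ^ 3 * R ^ 2 / (r ^ 3 * NN kk) := by
  have hα0 : ∀ n, 0 < α n := fun n => hr.trans_le (hα1 n)
  have hinj : ∀ t : M, (∀ n, (linF kk n ∘ₗ M.subtype) t = 0) → t = 0 := by
    intro t ht
    have h1 : (t : Spc kk) ∈ M ⊓ LinearMap.ker (Bmat kk α) :=
      ⟨t.2, (mem_ker_iff kk α hα0 _).2 ht⟩
    rw [hMker, Submodule.mem_bot] at h1
    exact Subtype.ext h1
  obtain ⟨x, hx⟩ := exists_rep (fun n => linF kk n ∘ₗ M.subtype) α r hr hα1 hinj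
    (linF kk p ∘ₗ M.subtype)
  have hcov := gauss_cov (fun n => linF kk n ∘ₗ M.subtype) α r hr hα1 hinj
    (linF kk m ∘ₗ M.subtype) (linF kk p ∘ₗ M.subtype) x hx
  have hexp : expM kk M α (fun t => linF kk m t * linF kk p t) = linF kk m (x : Spc kk) := hcov
  have htop : M ⊔ LinearMap.ker (Bmat kk α) = ⊤ := by
    refine Submodule.eq_top_of_disjoint _ _ ?_ (disjoint_iff.2 hMker)
    have := finrank_ker_ge kk hk α hα0
    omega
  have hxall : ∀ t : Spc kk, ∑ n, α n * linF kk n x * linF kk n t = linF kk p t := by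
    intro t
    have ht : t ∈ M ⊔ LinearMap.ker (Bmat kk α) := htop ▸ Submodule.mem_top
    obtain ⟨u, hu, w, hw, rfl⟩ := Submodule.mem_sup.1 ht
    have hw' := (mem_ker_iff kk α hα0 w).1 hw
    simp only [map_add, hw', add_zero]
    exact hx ⟨u, hu⟩
  rw [hexp, linF_apply]
  refine core hν hk r R hr hrR α hα1 hα2 p m (fun j i => (x : Spc kk) ⟨j, i⟩) ?_
  intro a j
  have hsing : ∀ n : MIdx kk, linF kk n (EuclideanSpace.single ⟨j, a j⟩ (1:ℝ)) = ind a j (n j) := by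
    intro n
    rw [linF_apply, Finset.sum_eq_single j]
    · by_cases h : n j = a j <;> simp [ind, h]
    · intro j' _ hj'
      simp [hj']
    · simp
  have h := hxall (EuclideanSpace.single ⟨j, a j⟩ (1:ℝ))
  simp only [hsing, linF_apply] at h
  exact h

/-- For `ν ≥ 3` and `ℳ` a subspace of codimension `ν−1` with
`ℳ ∩ ker(q) = {0}`, the correlations of `t` drawn from the distribution with density
proportional to `e^{−q}` on `ℳ` satisfy
`|E[(τ_{1,m_1}+⋯+τ_{ν,m_ν})(τ_{1,p_1}+⋯+τ_{ν,p_ν})]| ≤ Γ/k^{ν−1}` with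
`Γ = 14ν⁴R²/(r³ω^{7ν−5})`, and `≤ Γ/k^ν` when `m_j ≠ p_j` for every `j`. -/
theorem statement8 (ν : ℕ) (hν : 3 ≤ ν) (kk : Fin ν → ℕ) (hkk : ∀ j, 2 ≤ kk j)
    (r R ω k : ℝ) (hr : 0 < r) (hrR : r ≤ R) (hω0 : 0 < ω) (hω1 : ω ≤ 1)
    (hωk : 1 ≤ ω * k) (hlow : ∀ j, ω * k ≤ kk j) (hhigh : ∀ j, (kk j : ℝ) ≤ k)
    (α : MIdx kk → ℝ) (hα1 : ∀ m, r ≤ α m) (hα2 : ∀ m, α m ≤ R)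
    (M : Submodule ℝ (Spc kk))
    (hcodim : Module.finrank ℝ ↥M + (ν - 1) = Module.finrank ℝ (Spc kk))
    (hMker : M ⊓ LinearMap.ker (Bmat kk α) = ⊥)
    (m p : MIdx kk) :
    |expM kk M α (fun t => linF kk m t * linF kk p t)|
        ≤ (14 * (ν : ℝ)^4 * R^2 / (r^3 * ω ^ (7 * ν - 5))) / k ^ (ν - 1)
      ∧ ((∀ j, m j ≠ p j) →
        |expM kk M α (fun t => linF kk m t * linF kk p t)|
          ≤ (14 * (ν : ℝ)^4 * R^2 / (r^3 * ω ^ (7 * ν - 5))) / k ^ ν) := by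
  have hk : ∀ j, 0 < kk j := fun j => lt_of_lt_of_le two_pos (hkk j)
  have hb := expM_bound kk (by omega) hk r R hr hrR α hα1 hα2 M hcodim hMker m p
  set E := |expM kk M α (fun t => linF kk m t * linF kk p t)| with hE
  have hR : 0 < R := hr.trans_le hrR
  have hN := NN_pos hk
  have hkpos : 0 < k := by
    by_contra h
    have : ω * k ≤ 0 := mul_nonpos_of_nonneg_of_nonpos hω0.le (not_lt.1 h)
    linarith
  have hνp : (1:ℝ) ≤ ν := by exact_mod_cast (by omega : 1 ≤ ν)
  have hWN : (ω * k) ^ ν ≤ NN kk := by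
    have := Finset.prod_le_prod (s := (Finset.univ : Finset (Fin ν))) (f := fun _ => ω * k)
      (g := fun j => (kk j : ℝ)) (fun j _ => by linarith) (fun j _ => hlow j)
    simpa [NN] using this
  have hW1 : ∀ j, (kk j : ℝ) / (r * NN kk) ≤ 1 / (r * (ω * k) ^ (ν - 1)) := by
    intro j
    have h1 := Finset.prod_le_prod (s := Finset.univ.erase j) (f := fun _ => ω * k)
      (g := fun j => (kk j : ℝ)) (fun j _ => by linarith) (fun j _ => hlow j)
    have h2 : NN kk = kk j * ∏ l ∈ Finset.univ.erase j, (kk l : ℝ) :=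
      (Finset.mul_prod_erase _ _ (Finset.mem_univ j)).symm
    have hkj : (0:ℝ) < kk j := by exact_mod_cast hk j
    rw [Finset.prod_const, Finset.card_erase_of_mem (Finset.mem_univ j), Finset.card_univ,
      Fintype.card_fin] at h1
    rw [div_le_div_iff₀ (by positivity) (by positivity), h2]
    have h3 : (kk j * r : ℝ) * (ω * k) ^ (ν - 1) ≤ kk j * r * ∏ l ∈ Finset.univ.erase j, (kk l : ℝ) :=
      mul_le_mul_of_nonneg_left h1 (by positivity)
    nlinarith
  have hG : ∀ e : ℕ, e ≤ 7 * ν - 5 → 3 * (ν:ℝ) ^ 3 * R ^ 2 / (r ^ 3 * (ω * k) ^ e) ≤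
      (14 * (ν : ℝ)^4 * R^2 / (r^3 * ω ^ (7 * ν - 5))) / k ^ e := by
    intro e he
    rw [div_div, mul_pow, ← mul_assoc]
    have h1 : ω ^ (7 * ν - 5) ≤ ω ^ e := pow_le_pow_of_le_one hω0.le hω1 he
    have h2 : 3 * (ν:ℝ) ^ 3 ≤ 14 * (ν:ℝ) ^ 4 := by
      have : (ν:ℝ) ^ 3 * 1 ≤ (ν:ℝ) ^ 3 * ν := mul_le_mul_of_nonneg_left hνp (by positivity)
      have h0 : (0:ℝ) ≤ (ν:ℝ) ^ 3 := by positivity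
      nlinarith
    gcongr
  constructor
  · refine le_trans ?_ (hG (ν - 1) (by omega))
    refine hb.trans ?_
    have h1 : ∑ j, (if m j = p j then (kk j : ℝ) / (r * NN kk) else 0)
        ≤ ν * (1 / (r * (ω * k) ^ (ν - 1))) := by
      have : ∀ j ∈ (Finset.univ : Finset (Fin ν)),
          (if m j = p j then (kk j : ℝ) / (r * NN kk) else 0) ≤ 1 / (r * (ω * k) ^ (ν - 1)) := by
        intro j _
        split_ifs
        · exact hW1 j
        · positivity
      refine (Finset.sum_le_sum this).trans ?_
      simp
    have h2 : 2 * (ν:ℝ) ^ 3 * R ^ 2 / (r ^ 3 * NN kk) ≤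
        2 * (ν:ℝ) ^ 3 * R ^ 2 / (r ^ 3 * (ω * k) ^ (ν - 1)) := by
      have : (ω * k) ^ (ν - 1) ≤ NN kk := (pow_le_pow_right₀ hωk (by omega)).trans hWN
      gcongr
    have h3 : ν * (1 / (r * (ω * k) ^ (ν - 1))) ≤ (ν:ℝ) ^ 3 * R ^ 2 / (r ^ 3 * (ω * k) ^ (ν - 1)) := by
      rw [show ν * (1 / (r * (ω * k) ^ (ν - 1))) = ν * r ^ 2 / (r ^ 3 * (ω * k) ^ (ν - 1)) by
        field_simp]
      have h4 : (ν:ℝ) ≤ (ν:ℝ) ^ 3 := le_self_pow₀ hνp (by norm_num)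
      gcongr
    have h5 : 3 * (ν:ℝ) ^ 3 * R ^ 2 / (r ^ 3 * (ω * k) ^ (ν - 1)) =
      (ν:ℝ) ^ 3 * R ^ 2 / (r ^ 3 * (ω * k) ^ (ν - 1))
      + 2 * (ν:ℝ) ^ 3 * R ^ 2 / (r ^ 3 * (ω * k) ^ (ν - 1)) := by ring
    linarith
  · intro hmp
    refine le_trans ?_ (hG ν (by omega))
    refine hb.trans ?_
    simp only [hmp, if_false, Finset.sum_const_zero, zero_add]
    gcongr
    norm_num
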